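/- In intuitionistic propositional logic, the generalised De Morgan scheme GDM (((γ₁ ∧ γ₂) → δ) → ((γ₁ → δ) ∨ (γ₂ → δ)) for all γ₁, γ₂, δ) implies the linearity scheme LIN: assuming all instances of GDM are provable, every instance (φ → ψ) ∨ (ψ → φ) is provable. -/

import Mathlib

/-!
With `δ := φ ∧ ψ` the premise `(φ ∧ ψ) → δ` of GDM is an identity, so GDM yields
`(φ → φ ∧ ψ) ∨ (ψ → φ ∧ ψ)`. Projecting each disjunct to the other conjunct gives
`(φ → ψ) ∨ (ψ → φ)`. The argument is internal to the logic: the single instance of GDM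
provably implies the corresponding instance of LIN.
-/

/-- Propositional formulas over countably many atoms with `→`, `∧`, `∨`, `⊥`. -/
inductive PForm : Type
  | atom : ℕ → PForm
  | bot : PForm
  | imp : PForm → PForm → PForm
  | and : PForm → PForm → PForm
  | or : PForm → PForm → PForm

open PForm

/-- Hilbert-style provability for intuitionistic propositional logic,
extended by an arbitrary set `Ax` of extra axioms, with modus ponens as the
only inference rule. -/
inductive HilbertProv (Ax : PForm → Prop) : PForm → Prop
  | extra {φ} : Ax φ → HilbertProv Ax φ
  | k (φ ψ) : HilbertProv Ax (imp φ (imp ψ φ))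
  | s (φ ψ χ) : HilbertProv Ax
      (imp (imp φ (imp ψ χ)) (imp (imp φ ψ) (imp φ χ)))
  | andIntro (φ ψ) : HilbertProv Ax (imp φ (imp ψ (and φ ψ)))
  | andElimL (φ ψ) : HilbertProv Ax (imp (and φ ψ) φ)
  | andElimR (φ ψ) : HilbertProv Ax (imp (and φ ψ) ψ)
  | orIntroL (φ ψ) : HilbertProv Ax (imp φ (or φ ψ))
  | orIntroR (φ ψ) : HilbertProv Ax (imp ψ (or φ ψ))
  | orElim (φ ψ χ) : HilbertProv Ax
      (imp (imp φ χ) (imp (imp ψ χ) (imp (or φ ψ) χ)))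
  | exFalso (φ) : HilbertProv Ax (imp bot φ)
  | mp {φ ψ} : HilbertProv Ax (imp φ ψ) → HilbertProv Ax φ → HilbertProv Ax ψ

/-- The linearity axiom scheme LIN: all formulas of the form
`(φ → ψ) ∨ (ψ → φ)`. -/
def LINScheme : PForm → Prop :=
  fun f => ∃ φ ψ : PForm, f = or (imp φ ψ) (imp ψ φ)

namespace HilbertProv

variable {Ax : PForm → Prop} {φ φ' ψ ψ' χ : PForm}

theorem imp_refl (φ : PForm) : HilbertProv Ax (imp φ φ) :=
  ((s φ (imp φ φ) φ).mp (k φ (imp φ φ))).mp (k φ φ)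

theorem imp_of_right (h : HilbertProv Ax ψ) : HilbertProv Ax (imp φ ψ) :=
  (k ψ φ).mp h

theorem imp_imp_imp_right (h : HilbertProv Ax (imp ψ χ)) :
    HilbertProv Ax (imp (imp φ ψ) (imp φ χ)) :=
  (s φ ψ χ).mp (imp_of_right h)

theorem imp_trans (h₁ : HilbertProv Ax (imp φ ψ)) (h₂ : HilbertProv Ax (imp ψ χ)) :
    HilbertProv Ax (imp φ χ) :=
  (imp_imp_imp_right h₂).mp h₁

theorem imp_imp_of_left (h : HilbertProv Ax φ) :
    HilbertProv Ax (imp (imp φ ψ) ψ) :=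
  ((s (imp φ ψ) φ ψ).mp (imp_refl (imp φ ψ))).mp (imp_of_right h)

theorem or_imp_or (h₁ : HilbertProv Ax (imp φ φ')) (h₂ : HilbertProv Ax (imp ψ ψ')) :
    HilbertProv Ax (imp (or φ ψ) (or φ' ψ')) :=
  ((orElim φ ψ (or φ' ψ')).mp (imp_trans h₁ (orIntroL φ' ψ'))).mp
    (imp_trans h₂ (orIntroR φ' ψ'))

end HilbertProv

theorem gdm_implies_lin_general (Ax : PForm → Prop) (φ ψ : PForm) :
    HilbertProv Ax
      (imp
        (imp (imp (and φ ψ) (and φ ψ)) (or (imp φ (and φ ψ)) (imp ψ (and φ ψ))))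
        (or (imp φ ψ) (imp ψ φ))) := by
  have premise : HilbertProv Ax (imp (and φ ψ) (and φ ψ)) := .imp_refl (and φ ψ)
  have left : HilbertProv Ax (imp (imp φ (and φ ψ)) (imp φ ψ)) :=
    .imp_imp_imp_right (.andElimR φ ψ)
  have right : HilbertProv Ax (imp (imp ψ (and φ ψ)) (imp ψ φ)) :=
    .imp_imp_imp_right (.andElimL φ ψ)
  exact .imp_trans (.imp_imp_of_left premise) (.or_imp_or left right)

/-- In intuitionistic propositional logic (over any extra axiom set `Ax`),
if every instance of the generalised De Morgan scheme GDM is provable, then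
every instance of the linearity scheme LIN is provable. -/
theorem gdm_implies_lin (Ax : PForm → Prop)
    (hGDM : ∀ γ₁ γ₂ δ : PForm,
      HilbertProv Ax
        (PForm.imp (PForm.imp (PForm.and γ₁ γ₂) δ)
          (PForm.or (PForm.imp γ₁ δ) (PForm.imp γ₂ δ)))) :
    ∀ φ ψ : PForm,
      HilbertProv Ax (PForm.or (PForm.imp φ ψ) (PForm.imp ψ φ)) := by
  intro φ ψ
  exact (gdm_implies_lin_general Ax φ ψ).mp (hGDM φ ψ (.and φ ψ))
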